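/- arXiv:2305.03579 — 6 statements merged into one kernel-verified Lean document; each statement's English description precedes it below -/
import Mathlib

section
/- Let A, B, C, D : ℝ⁴ → ℝ be functions, let G_α be the Lychagin–Rubtsov matrix with rows [[2C, −2B, D, 0], [−2B, 2A, 0, D], [D, 0, 0, 0], [0, D, 0, 0]], and let u ∈ ℝ⁴ with D u ≠ 0. Then: (i) the subspace of ℝ⁴ spanned by the standard basis vectors e₃ and e₄ is totally isotropic for the bilinear form v, w ↦ vᵀ (G_α u) w; and (ii) the symmetric matrix G_α u has signature (2,2), i.e., there exists an invertible matrix P ∈ Matrix (Fin 4) (Fin 4) ℝ with Pᵀ (G_α u) P equal to the diagonal matrix diag(1, 1, −1, −1). -/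
open Matrix

/-- The Lychagin–Rubtsov matrix associated with coefficient functions
`A B C D : (Fin 4 → ℝ) → ℝ`, evaluated pointwise. -/
noncomputable def LRmatrix (A B C D : (Fin 4 → ℝ) → ℝ) (u : Fin 4 → ℝ) :
    Matrix (Fin 4) (Fin 4) ℝ :=
  !![2 * C u, -2 * B u, D u, 0;
     -2 * B u, 2 * A u, 0, D u;
     D u, 0, 0, 0;
     0, D u, 0, 0]

/-- If `D u ≠ 0` then (i) the span of the standard basis vectors `e₃, e₄` is totally
isotropic for the bilinear form `(v, w) ↦ vᵀ (G_α u) w`, and (ii) `G_α u` has signature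
`(2,2)`: it is congruent to `diag(1, 1, -1, -1)`. -/
theorem LR_isotropic_and_signature (A B C D : (Fin 4 → ℝ) → ℝ) (u : Fin 4 → ℝ)
    (hD : D u ≠ 0) :
    (∀ v ∈ Submodule.span ℝ
        ({Pi.single (2 : Fin 4) (1 : ℝ), Pi.single (3 : Fin 4) (1 : ℝ)} :
          Set (Fin 4 → ℝ)),
      ∀ w ∈ Submodule.span ℝ
        ({Pi.single (2 : Fin 4) (1 : ℝ), Pi.single (3 : Fin 4) (1 : ℝ)} :
          Set (Fin 4 → ℝ)),
        v ⬝ᵥ (LRmatrix A B C D u).mulVec w = 0) ∧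
    (∃ P : Matrix (Fin 4) (Fin 4) ℝ, IsUnit P ∧
        Pᵀ * LRmatrix A B C D u * P =
          Matrix.diagonal ![1, 1, -1, -1]) := by
  constructor
  · intro v hv w hw
    rw [Submodule.mem_span_pair] at hv hw
    obtain ⟨a, b, rfl⟩ := hv
    obtain ⟨c, d, rfl⟩ := hw
    simp [LRmatrix, Matrix.mulVec, dotProduct, Fin.sum_univ_four, Pi.single_apply]
  · have key : ∃ P : Matrix (Fin 4) (Fin 4) ℝ, Pᵀ * LRmatrix A B C D u * P =
          Matrix.diagonal ![1, 1, -1, -1] := by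
      refine ⟨!![1, 0, 1, 0;
        0, 1, 0, 1;
        -C u / D u + 1 / (2 * D u), B u / D u, -C u / D u - 1 / (2 * D u), B u / D u;
        B u / D u, -A u / D u + 1 / (2 * D u), B u / D u, -A u / D u - 1 / (2 * D u)], ?_⟩
      ext i j
      fin_cases i <;> fin_cases j <;>
        simp [LRmatrix, Matrix.mul_apply, Fin.sum_univ_four, Matrix.diagonal_apply] <;>
        field_simp <;> ring
    obtain ⟨P, hP⟩ := key
    refine ⟨P, ?_, hP⟩
    have h : (Matrix.diagonal ![1, 1, -1, -1] * (Pᵀ * LRmatrix A B C D u)) * P = 1 := by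
      rw [Matrix.mul_assoc, hP, Matrix.diagonal_mul_diagonal, ← Matrix.diagonal_one]
      congr 1
      ext i
      fin_cases i <;> simp
    exact IsUnit.of_mul_eq_one_right _ h
end

section
/- Let c₁, …, c₆ ∈ ℝ satisfy c₂c₄ + c₃c₅ − c₁c₆ = 0, let L(x,y,p,q) = c₁ + c₂x + c₃y + c₄p + c₅q + c₆(xp + yq), let U ⊆ ℝ⁴ be an open set on which L is nowhere zero, and let D = L⁻² on U. Then the Ricci tensor of the reduced Lychagin–Rubtsov metric G_D (computed from the coordinate Christoffel symbols and curvature tensor) vanishes identically on U. -/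
/-- Partial derivative of `f : ℝ⁴ → ℝ` in the `i`-th coordinate direction. -/
noncomputable def pd (i : Fin 4) (f : (Fin 4 → ℝ) → ℝ) (u : Fin 4 → ℝ) : ℝ :=
  fderiv ℝ f u (Pi.single i 1)

/-- Christoffel symbols `Γᵏᵢⱼ` of a matrix-valued metric `g` in coordinates. -/
noncomputable def christoffel (g : (Fin 4 → ℝ) → Matrix (Fin 4) (Fin 4) ℝ)
    (k i j : Fin 4) (u : Fin 4 → ℝ) : ℝ :=
  (1 / 2) * ∑ l, (g u)⁻¹ k l *
    (pd i (fun v => g v j l) u + pd j (fun v => g v i l) u - pd l (fun v => g v i j) u)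

/-- Curvature tensor `Rˡᵢⱼₖ` of a matrix-valued metric `g` in coordinates. -/
noncomputable def riemann (g : (Fin 4 → ℝ) → Matrix (Fin 4) (Fin 4) ℝ)
    (l i j k : Fin 4) (u : Fin 4 → ℝ) : ℝ :=
  pd j (christoffel g l i k) u - pd k (christoffel g l i j) u +
    ∑ m, (christoffel g l j m u * christoffel g m i k u -
          christoffel g l k m u * christoffel g m i j u)

/-- Ricci tensor `Ricᵢₖ = Σₗ Rˡᵢₗₖ`. -/
noncomputable def ricci (g : (Fin 4 → ℝ) → Matrix (Fin 4) (Fin 4) ℝ)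
    (i k : Fin 4) (u : Fin 4 → ℝ) : ℝ :=
  ∑ l, riemann g l i l k u

/-- Scalar curvature `R = Σᵢₖ (g⁻¹)ⁱᵏ Ricᵢₖ`. -/
noncomputable def scalarCurv (g : (Fin 4 → ℝ) → Matrix (Fin 4) (Fin 4) ℝ)
    (u : Fin 4 → ℝ) : ℝ :=
  ∑ i, ∑ k, (g u)⁻¹ i k * ricci g i k u

/-- The reduced Lychagin–Rubtsov metric associated with `D : ℝ⁴ → ℝ`. -/
noncomputable def GD (D : (Fin 4 → ℝ) → ℝ) (u : Fin 4 → ℝ) :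
    Matrix (Fin 4) (Fin 4) ℝ :=
  !![0, 0, D u, 0;
     0, 0, 0, D u;
     D u, 0, 0, 0;
     0, D u, 0, 0]


/-- Kronecker delta. -/
noncomputable def dl (i j : Fin 4) : ℝ := if i = j then 1 else 0

/-- The quadratic function `L`. -/
noncomputable def LL (c₁ : ℝ) (a : Fin 4 → ℝ) (c₆ : ℝ) (u : Fin 4 → ℝ) : ℝ :=
  c₁ + a 0 * u 0 + a 1 * u 1 + a 2 * u 2 + a 3 * u 3 + c₆ * (u 0 * u 2 + u 1 * u 3)

/-- Partial derivatives of `L`. -/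
noncomputable def QQ (a : Fin 4 → ℝ) (c₆ : ℝ) (i : Fin 4) (u : Fin 4 → ℝ) : ℝ :=
  a i + c₆ * u (i + 2)

/-- Numerator of the Christoffel symbols. -/
noncomputable def NN (a : Fin 4 → ℝ) (c₆ : ℝ) (k i j : Fin 4) (u : Fin 4 → ℝ) : ℝ :=
  dl k j * QQ a c₆ i u + dl k i * QQ a c₆ j u - dl (i + 2) j * QQ a c₆ (k + 2) u

lemma GD_apply (D : (Fin 4 → ℝ) → ℝ) (u : Fin 4 → ℝ) (i j : Fin 4) :
    GD D u i j = dl (i + 2) j * D u := by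
  fin_cases i <;> fin_cases j <;> simp [GD, dl]

lemma GD_inv (D : (Fin 4 → ℝ) → ℝ) (u : Fin 4 → ℝ) (h : D u ≠ 0) :
    (GD D u)⁻¹ = GD (fun v => (D v)⁻¹) u := by
  apply Matrix.inv_eq_right_inv
  ext i j
  fin_cases i <;> fin_cases j <;> simp [GD, Matrix.mul_apply, Fin.sum_univ_four, h]

lemma pd_eq {f : (Fin 4 → ℝ) → ℝ} {f' : (Fin 4 → ℝ) →L[ℝ] ℝ} {u : Fin 4 → ℝ} {i : Fin 4} {r : ℝ}
    (h : HasFDerivAt f f' u) (hr : f' (Pi.single i 1) = r) : pd i f u = r := by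
  rw [pd, h.fderiv, hr]

lemma pd_congr {f g : (Fin 4 → ℝ) → ℝ} {U : Set (Fin 4 → ℝ)} (hU : IsOpen U)
    (h : ∀ u ∈ U, f u = g u) {u : Fin 4 → ℝ} (hu : u ∈ U) (i : Fin 4) : pd i f u = pd i g u := by
  have : f =ᶠ[nhds u] g := Filter.eventuallyEq_of_mem (hU.mem_nhds hu) h
  rw [pd, pd, this.fderiv_eq]

lemma diff_LL (c₁ : ℝ) (a : Fin 4 → ℝ) (c₆ : ℝ) (u : Fin 4 → ℝ) :
    DifferentiableAt ℝ (LL c₁ a c₆) u := by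
  unfold LL; fun_prop

lemma diff_NN (a : Fin 4 → ℝ) (c₆ : ℝ) (k i j : Fin 4) (u : Fin 4 → ℝ) :
    DifferentiableAt ℝ (NN a c₆ k i j) u := by
  unfold NN QQ; fun_prop

/-- Partial derivative as a one-variable derivative. -/
lemma pd_line {f : (Fin 4 → ℝ) → ℝ} {u : Fin 4 → ℝ} (hf : DifferentiableAt ℝ f u) (i : Fin 4)
    {r : ℝ} (h : HasDerivAt (fun t : ℝ => f (u + t • Pi.single i 1)) r 0) : pd i f u = r := by
  have h1 := hf.hasFDerivAt.hasLineDerivAt (Pi.single i 1)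
  exact HasDerivAt.unique h1 h

lemma pd_LL (c₁ : ℝ) (a : Fin 4 → ℝ) (c₆ : ℝ) (u : Fin 4 → ℝ) (i : Fin 4) :
    pd i (LL c₁ a c₆) u = QQ a c₆ i u := by
  apply pd_line (diff_LL c₁ a c₆ u)
  have h : ∀ t : ℝ, LL c₁ a c₆ (u + t • Pi.single i 1) = LL c₁ a c₆ u + t * QQ a c₆ i u := by
    intro t
    fin_cases i <;> simp [LL, QQ, Pi.single_apply] <;> ring
  simp only [h]
  simpa using ((hasDerivAt_id (0 : ℝ)).mul_const (QQ a c₆ i u)).const_add (LL c₁ a c₆ u)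

lemma pd_NN (a : Fin 4 → ℝ) (c₆ : ℝ) (k i j m : Fin 4) (u : Fin 4 → ℝ) :
    pd m (NN a c₆ k i j) u =
      c₆ * (dl k j * dl (i + 2) m + dl k i * dl (j + 2) m - dl (i + 2) j * dl k m) := by
  apply pd_line (diff_NN a c₆ k i j u)
  have h2 : k + 2 + 2 = k := by fin_cases k <;> rfl
  have h : ∀ t : ℝ, NN a c₆ k i j (u + t • Pi.single m 1) = NN a c₆ k i j u +
      t * (c₆ * (dl k j * dl (i + 2) m + dl k i * dl (j + 2) m - dl (i + 2) j * dl k m)) := by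
    intro t
    simp only [NN, QQ, Pi.add_apply, Pi.smul_apply, Pi.single_apply, smul_eq_mul, h2]
    simp only [dl]
    ring
  simp only [h]
  simpa using ((hasDerivAt_id (0 : ℝ)).mul_const
    (c₆ * (dl k j * dl (i + 2) m + dl k i * dl (j + 2) m - dl (i + 2) j * dl k m))).const_add
      (NN a c₆ k i j u)

lemma pd_quot (c₁ : ℝ) (a : Fin 4 → ℝ) (c₆ : ℝ) (k i j m : Fin 4) (u : Fin 4 → ℝ)
    (h0 : LL c₁ a c₆ u ≠ 0) :
    pd m (fun v => -(NN a c₆ k i j v * (LL c₁ a c₆ v)⁻¹)) u =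
      -(pd m (NN a c₆ k i j) u * (LL c₁ a c₆ u)⁻¹
        - NN a c₆ k i j u * QQ a c₆ m u * ((LL c₁ a c₆ u)⁻¹) ^ 2) := by
  have hN := (diff_NN a c₆ k i j u).hasFDerivAt
  have hL := (diff_LL c₁ a c₆ u).hasFDerivAt
  refine pd_eq ((hN.mul ((hasDerivAt_inv h0).comp_hasFDerivAt u hL)).neg) ?_
  rw [← pd_LL c₁ a c₆ u m]
  simp [pd]
  ring

lemma pd_D (c₁ : ℝ) (a : Fin 4 → ℝ) (c₆ : ℝ) (s : ℝ) (m : Fin 4) (u : Fin 4 → ℝ)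
    (h0 : LL c₁ a c₆ u ≠ 0) :
    pd m (fun v => s * ((LL c₁ a c₆ v) ^ 2)⁻¹) u =
      s * (-2 * QQ a c₆ m u * ((LL c₁ a c₆ u)⁻¹) ^ 3) := by
  have hL := (diff_LL c₁ a c₆ u).hasFDerivAt
  refine pd_eq (((hasDerivAt_inv (pow_ne_zero 2 h0)).comp_hasFDerivAt u (hL.pow 2)).const_mul s) ?_
  rw [← pd_LL c₁ a c₆ u m]
  simp [pd]
  field_simp
  simp

lemma christoffel_GD (c₁ : ℝ) (a : Fin 4 → ℝ) (c₆ : ℝ)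
    (U : Set (Fin 4 → ℝ)) (hU : IsOpen U) (hL0 : ∀ u ∈ U, LL c₁ a c₆ u ≠ 0)
    (D : (Fin 4 → ℝ) → ℝ) (hD : ∀ u ∈ U, D u = ((LL c₁ a c₆ u) ^ 2)⁻¹)
    (k i j : Fin 4) (u : Fin 4 → ℝ) (hu : u ∈ U) :
    christoffel (GD D) k i j u = -(NN a c₆ k i j u * (LL c₁ a c₆ u)⁻¹) := by
  have h0 := hL0 u hu
  have hg : ∀ m i j, pd m (fun v => GD D v i j) u =
      dl (i + 2) j * (-2 * QQ a c₆ m u * ((LL c₁ a c₆ u)⁻¹) ^ 3) := by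
    intro m i j
    rw [← pd_D c₁ a c₆ _ m u h0]
    exact pd_congr hU (fun v hv => by rw [GD_apply, hD v hv]) hu m
  have hDu : D u ≠ 0 := by rw [hD u hu]; exact inv_ne_zero (pow_ne_zero 2 h0)
  unfold christoffel
  simp only [hg]
  simp only [GD_inv D u hDu, GD_apply, hD u hu, inv_inv]
  have hs : ∀ f : Fin 4 → ℝ, ∑ l, dl (k + 2) l * LL c₁ a c₆ u ^ 2 * f l
      = LL c₁ a c₆ u ^ 2 * f (k + 2) := by
    intro f
    simp [dl]
  rw [hs]
  have e1 : ∀ j : Fin 4, dl (j + 2) (k + 2) = dl k j := by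
    intro j; simp [dl, eq_comm]
  simp only [e1, NN]
  field_simp
  ring

/-- If `D = L⁻²` where `L(x,y,p,q) = c₁ + c₂x + c₃y + c₄p + c₅q + c₆(xp + yq)` with
`c₂c₄ + c₃c₅ − c₁c₆ = 0`, then the Ricci tensor of the reduced Lychagin–Rubtsov
metric `G_D` vanishes identically on any open set where `L ≠ 0`.
Coordinates: `x = u 0`, `y = u 1`, `p = u 2`, `q = u 3`. -/
theorem ricci_flat_of_plucker (c₁ c₂ c₃ c₄ c₅ c₆ : ℝ)
    (hc : c₂ * c₄ + c₃ * c₅ - c₁ * c₆ = 0)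
    (L : (Fin 4 → ℝ) → ℝ)
    (hL : L = fun u => c₁ + c₂ * u 0 + c₃ * u 1 + c₄ * u 2 + c₅ * u 3 +
      c₆ * (u 0 * u 2 + u 1 * u 3))
    (U : Set (Fin 4 → ℝ)) (hU : IsOpen U) (hL0 : ∀ u ∈ U, L u ≠ 0)
    (D : (Fin 4 → ℝ) → ℝ) (hD : ∀ u ∈ U, D u = ((L u) ^ 2)⁻¹) :
    ∀ u ∈ U, ∀ i k : Fin 4, ricci (GD D) i k u = 0 := by
  set a : Fin 4 → ℝ := ![c₂, c₃, c₄, c₅] with ha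
  have hLL : L = LL c₁ a c₆ := by
    rw [hL]; funext u; simp [LL, ha]
  rw [hLL] at hL0 hD
  intro u hu i k
  have h0 := hL0 u hu
  have hC := christoffel_GD c₁ a c₆ U hU hL0 D hD
  have hP : ∀ m l i j, pd m (christoffel (GD D) l i j) u =
      -(c₆ * (dl l j * dl (i + 2) m + dl l i * dl (j + 2) m - dl (i + 2) j * dl l m)
        * (LL c₁ a c₆ u)⁻¹
        - NN a c₆ l i j u * QQ a c₆ m u * ((LL c₁ a c₆ u)⁻¹) ^ 2) := by
    intro m l i j
    rw [← pd_NN a c₆ l i j m u, ← pd_quot c₁ a c₆ l i j m u h0]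
    exact pd_congr hU (fun v hv => hC l i j v hv) hu m
  have key : c₆ * LL c₁ a c₆ u = QQ a c₆ 0 u * QQ a c₆ 2 u + QQ a c₆ 1 u * QQ a c₆ 3 u := by
    simp [LL, QQ, ha]
    linear_combination -hc
  unfold ricci riemann
  simp only [hP, hC _ _ _ u hu, NN]
  have hI : c₆ * (LL c₁ a c₆ u)⁻¹ = (QQ a c₆ 0 u * QQ a c₆ 2 u + QQ a c₆ 1 u * QQ a c₆ 3 u)
      * ((LL c₁ a c₆ u)⁻¹) ^ 2 := by
    rw [← key]; field_simp
  generalize (LL c₁ a c₆ u)⁻¹ = M at *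
  fin_cases i <;> fin_cases k <;> simp [Fin.sum_univ_four, dl] <;> first
    | linear_combination 6 * hI
    | ring
end

section
/- Let I ⊆ ℝ be a nonempty open interval and f : I → ℝ a smooth function with f > 0 on I satisfying the ODE 3 (f′(x))² = 2 f(x) f″(x) for all x ∈ I. Then there exist constants a, b ∈ ℝ such that a + bx ≠ 0 for all x ∈ I and f(x) = (a + bx)⁻² for all x ∈ I. -/
/-- If `f` is smooth and positive on a nonempty open interval `I ⊆ ℝ` and satisfies the
ODE `3 (f′)² = 2 f f″` on `I`, then `f(x) = (a + bx)⁻²` on `I` for some constants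
`a, b ∈ ℝ` with `a + bx ≠ 0` on `I`. -/
theorem ode_solution (I : Set ℝ) (hI : IsOpen I) (hIne : I.Nonempty)
    (hIconn : IsPreconnected I)
    (f : ℝ → ℝ) (hf : ContDiffOn ℝ (⊤ : ℕ∞) f I) (hfpos : ∀ x ∈ I, 0 < f x)
    (hode : ∀ x ∈ I, 3 * (deriv f x) ^ 2 = 2 * f x * deriv (deriv f) x) :
    ∃ a b : ℝ, (∀ x ∈ I, a + b * x ≠ 0) ∧ ∀ x ∈ I, f x = ((a + b * x) ^ 2)⁻¹ := by
  have d1 : ∀ x ∈ I, HasDerivAt f (deriv f x) x := fun x hx =>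
    ((hf.differentiableOn (by simp)).differentiableAt (hI.mem_nhds hx)).hasDerivAt
  have hf' : ContDiffOn ℝ 1 (deriv f) I :=
    hf.deriv_of_isOpen hI (by
      have h : ((1 + 1 : ℕ∞) : WithTop ℕ∞) ≤ ((⊤ : ℕ∞) : WithTop ℕ∞) :=
        WithTop.coe_le_coe.2 le_top
      exact h)
  have d2 : ∀ x ∈ I, HasDerivAt (deriv f) (deriv (deriv f) x) x := fun x hx =>
    ((hf'.differentiableOn (by simp)).differentiableAt (hI.mem_nhds hx)).hasDerivAt
  have ds : ∀ x ∈ I, HasDerivAt (fun y => √(f y)) (deriv f x / (2 * √(f x))) x := fun x hx =>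
    (d1 x hx).sqrt (hfpos x hx).ne'
  have dh : ∀ x ∈ I, HasDerivAt (fun y => deriv f y / (√(f y)) ^ 3) 0 x := by
    intro x hx
    have h := (d2 x hx).div ((ds x hx).pow 3) (pow_ne_zero 3 (Real.sqrt_pos.2 (hfpos x hx)).ne')
    refine h.congr_deriv ?_
    have hs := Real.sqrt_pos.2 (hfpos x hx)
    have hq := Real.sq_sqrt (hfpos x hx).le
    have ho := hode x hx
    rw [← hq] at ho
    simp only [Pi.pow_apply]
    generalize √(f x) = s at *
    field_simp
    norm_num
    linear_combination (-s ^ 2) * ho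
  obtain ⟨c, hc⟩ := hI.exists_is_const_of_deriv_eq_zero hIconn
    (fun x hx => (dh x hx).differentiableAt.differentiableWithinAt)
    (fun x hx => (dh x hx).deriv)
  have dg : ∀ x ∈ I, HasDerivAt (fun y => (√(f y))⁻¹ - (-c / 2) * y) 0 x := by
    intro x hx
    have hs := Real.sqrt_pos.2 (hfpos x hx)
    have h := ((ds x hx).inv hs.ne').sub ((hasDerivAt_id x).const_mul (-c / 2))
    refine h.congr_deriv ?_
    have := hc x hx
    rw [← this]
    field_simp
    ring
  obtain ⟨a, ha⟩ := hI.exists_is_const_of_deriv_eq_zero hIconn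
    (fun x hx => (dg x hx).differentiableAt.differentiableWithinAt)
    (fun x hx => (dg x hx).deriv)
  have key : ∀ x ∈ I, a + (-c / 2) * x = (√(f x))⁻¹ := by
    intro x hx
    have := ha x hx
    linarith
  refine ⟨a, -c / 2, fun x hx => ?_, fun x hx => ?_⟩
  · rw [key x hx]
    exact inv_ne_zero (Real.sqrt_pos.2 (hfpos x hx)).ne'
  · rw [key x hx, inv_pow, inv_inv, Real.sq_sqrt (hfpos x hx).le]
end

section
/- Let c₁, …, c₆ ∈ ℝ, let L(x,y,p,q) = c₁ + c₂x + c₃y + c₄p + c₅q + c₆(xp + yq), and let D = L⁻² on the open set where L ≠ 0. Then D satisfies identically the equations 3 D_i² − 2 D D_{ii} = 0 for each i ∈ {x, y, p, q} and 3 D_x D_y − 2 D D_{xy} = 0, 3 D_x D_q − 2 D D_{xq} = 0, 3 D_p D_y − 2 D D_{py} = 0, 3 D_p D_q − 2 D D_{pq} = 0; moreover −2 D D_{yq} + 3 D_x D_p − 4 D D_{xp} = 12 L⁻⁶ (c₁c₆ − c₂c₄ − c₃c₅) and −2 D D_{xp} + 3 D_y D_q − 4 D D_{yq} = 12 L⁻⁶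 (c₁c₆ − c₂c₄ − c₃c₅), so the last two equations vanish identically if and only if c₂c₄ + c₃c₅ − c₁c₆ = 0. -/
lemma pd_eq_of_hasFDerivAt {f : (Fin 4 → ℝ) → ℝ} {u : Fin 4 → ℝ}
    {f' : (Fin 4 → ℝ) →L[ℝ] ℝ} (h : HasFDerivAt f f' u) (i : Fin 4) :
    pd i f u = f' (Pi.single i 1) := by
  unfold pd
  rw [h.fderiv]

/-- First partials of `L⁻²`. -/
lemma pd_inv_sq {L : (Fin 4 → ℝ) → ℝ} {u : Fin 4 → ℝ} (hd : DifferentiableAt ℝ L u)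
    (h0 : L u ≠ 0) (i : Fin 4) :
    pd i (fun v => ((L v) ^ 2)⁻¹) u = -2 * ((L u) ^ 3)⁻¹ * pd i L u := by
  have h1 : HasDerivAt (fun t : ℝ => (t ^ 2)⁻¹) (-2 * ((L u) ^ 3)⁻¹) (L u) := by
    have := (hasDerivAt_pow 2 (L u)).fun_inv (pow_ne_zero 2 h0)
    refine this.congr_deriv ?_
    norm_num
    field_simp
    try norm_num
  have h2 := h1.comp_hasFDerivAt u hd.hasFDerivAt
  have h3 := pd_eq_of_hasFDerivAt h2 i
  simpa [Function.comp_def, pd] using h3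

/-- Second partials of `L⁻²`. -/
lemma pd_pd_inv_sq {L : (Fin 4 → ℝ) → ℝ} {u : Fin 4 → ℝ} (hd : Differentiable ℝ L)
    (h0 : L u ≠ 0) (i j : Fin 4) (hj : DifferentiableAt ℝ (pd j L) u) :
    pd i (pd j (fun v => ((L v) ^ 2)⁻¹)) u =
      6 * ((L u) ^ 4)⁻¹ * pd i L u * pd j L u - 2 * ((L u) ^ 3)⁻¹ * pd i (pd j L) u := by
  have hev : pd j (fun v => ((L v) ^ 2)⁻¹) =ᶠ[nhds u]
      fun v => -2 * ((L v) ^ 3)⁻¹ * pd j L v := by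
    filter_upwards [hd.continuous.continuousAt.eventually_ne h0] with v hv
    exact pd_inv_sq (hd v) hv j
  have h1 : HasDerivAt (fun t : ℝ => -2 * (t ^ 3)⁻¹) (6 * ((L u) ^ 4)⁻¹) (L u) := by
    have := ((hasDerivAt_pow 3 (L u)).fun_inv (pow_ne_zero 3 h0)).const_mul (-2)
    refine this.congr_deriv ?_
    norm_num
    field_simp
    try norm_num
  have h2 := h1.comp_hasFDerivAt u (hd u).hasFDerivAt
  have h3 := (h2.mul hj.hasFDerivAt).congr_of_eventuallyEq hev
  rw [pd_eq_of_hasFDerivAt h3 i]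
  simp [pd]
  ring

/-- For `L(x,y,p,q) = c₁ + c₂x + c₃y + c₄p + c₅q + c₆(xp + yq)` and `D = L⁻²` on the
set where `L ≠ 0`, the function `D` satisfies the eight equations
`3 Dᵢ² − 2 D Dᵢᵢ = 0`, `3 Dₓ D_y − 2 D D_{xy} = 0`, `3 Dₓ D_q − 2 D D_{xq} = 0`,
`3 D_p D_y − 2 D D_{py} = 0`, `3 D_p D_q − 2 D D_{pq} = 0`; the two remaining
combinations equal `12 L⁻⁶ (c₁c₆ − c₂c₄ − c₃c₅)`, hence they vanish identically
if and only if `c₂c₄ + c₃c₅ − c₁c₆ = 0`.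
Coordinates: `x = u 0`, `y = u 1`, `p = u 2`, `q = u 3`. -/
theorem inverse_square_solves_system (c₁ c₂ c₃ c₄ c₅ c₆ : ℝ)
    (L D : (Fin 4 → ℝ) → ℝ)
    (hL : L = fun u => c₁ + c₂ * u 0 + c₃ * u 1 + c₄ * u 2 + c₅ * u 3 +
      c₆ * (u 0 * u 2 + u 1 * u 3))
    (hD : D = fun u => ((L u) ^ 2)⁻¹) :
    (∀ u : Fin 4 → ℝ, L u ≠ 0 →
      ((∀ i : Fin 4, 3 * (pd i D u) ^ 2 - 2 * D u * pd i (pd i D) u = 0) ∧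
        3 * pd 0 D u * pd 1 D u - 2 * D u * pd 0 (pd 1 D) u = 0 ∧
        3 * pd 0 D u * pd 3 D u - 2 * D u * pd 0 (pd 3 D) u = 0 ∧
        3 * pd 2 D u * pd 1 D u - 2 * D u * pd 2 (pd 1 D) u = 0 ∧
        3 * pd 2 D u * pd 3 D u - 2 * D u * pd 2 (pd 3 D) u = 0 ∧
        -2 * D u * pd 1 (pd 3 D) u + 3 * pd 0 D u * pd 2 D u
          - 4 * D u * pd 0 (pd 2 D) u
          = 12 * ((L u) ^ 6)⁻¹ * (c₁ * c₆ - c₂ * c₄ - c₃ * c₅) ∧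
        -2 * D u * pd 0 (pd 2 D) u + 3 * pd 1 D u * pd 3 D u
          - 4 * D u * pd 1 (pd 3 D) u
          = 12 * ((L u) ^ 6)⁻¹ * (c₁ * c₆ - c₂ * c₄ - c₃ * c₅))) ∧
    ((∀ u : Fin 4 → ℝ, L u ≠ 0 →
        -2 * D u * pd 1 (pd 3 D) u + 3 * pd 0 D u * pd 2 D u
          - 4 * D u * pd 0 (pd 2 D) u = 0 ∧
        -2 * D u * pd 0 (pd 2 D) u + 3 * pd 1 D u * pd 3 D u
          - 4 * D u * pd 1 (pd 3 D) u = 0) ↔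
      c₂ * c₄ + c₃ * c₅ - c₁ * c₆ = 0) := by
  have hLd : Differentiable ℝ L := by rw [hL]; fun_prop
  have hp : ∀ (i : Fin 4) (u : Fin 4 → ℝ), HasFDerivAt (fun v : Fin 4 → ℝ => v i)
      (ContinuousLinearMap.proj (R := ℝ) (φ := fun _ : Fin 4 => ℝ) i) u :=
    fun i u => hasFDerivAt_apply i u
  have hF := fun u : Fin 4 → ℝ =>
    ((((((hp 0 u).const_mul c₂).const_add c₁).add ((hp 1 u).const_mul c₃)).add
      ((hp 2 u).const_mul c₄)).add ((hp 3 u).const_mul c₅)).add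
      ((((hp 0 u).mul (hp 2 u)).add ((hp 1 u).mul (hp 3 u))).const_mul c₆)
  have g0 : pd 0 L = fun u => c₂ + c₆ * u 2 := by
    funext u; rw [hL]; refine (pd_eq_of_hasFDerivAt (hF u) 0).trans ?_; simp
  have g1 : pd 1 L = fun u => c₃ + c₆ * u 3 := by
    funext u; rw [hL]; refine (pd_eq_of_hasFDerivAt (hF u) 1).trans ?_; simp
  have g2 : pd 2 L = fun u => c₄ + c₆ * u 0 := by
    funext u; rw [hL]; refine (pd_eq_of_hasFDerivAt (hF u) 2).trans ?_; simp
  have g3 : pd 3 L = fun u => c₅ + c₆ * u 1 := by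
    funext u; rw [hL]; refine (pd_eq_of_hasFDerivAt (hF u) 3).trans ?_; simp
  have hG : ∀ (i k : Fin 4) (c : ℝ) (u : Fin 4 → ℝ),
      pd i (fun u => c + c₆ * u k) u = c₆ * (Pi.single i (1 : ℝ) : Fin 4 → ℝ) k := by
    intro i k c u
    refine (pd_eq_of_hasFDerivAt (((hp k u).const_mul c₆).const_add c) i).trans ?_
    simp
  have hdj : ∀ (j : Fin 4) (u : Fin 4 → ℝ), DifferentiableAt ℝ (pd j L) u := by
    intro j u
    fin_cases j
    · simp only [Fin.zero_eta, g0]; fun_prop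
    · simp only [Fin.mk_one, g1]; fun_prop
    · simp only [Fin.reduceFinMk, g2]; fun_prop
    · simp only [Fin.reduceFinMk, g3]; fun_prop
  have key : ∀ (u : Fin 4 → ℝ), L u ≠ 0 → ∀ i j, 3 * pd i D u * pd j D u
      - 2 * D u * pd i (pd j D) u = 4 * ((L u) ^ 5)⁻¹ * pd i (pd j L) u := by
    intro u h0 i j
    rw [hD, pd_inv_sq (hLd u) h0, pd_inv_sq (hLd u) h0, pd_pd_inv_sq hLd h0 i j (hdj j u)]
    field_simp
    ring
  have main : ∀ u : Fin 4 → ℝ, L u ≠ 0 →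
        -2 * D u * pd 1 (pd 3 D) u + 3 * pd 0 D u * pd 2 D u
          - 4 * D u * pd 0 (pd 2 D) u
          = 12 * ((L u) ^ 6)⁻¹ * (c₁ * c₆ - c₂ * c₄ - c₃ * c₅) ∧
        -2 * D u * pd 0 (pd 2 D) u + 3 * pd 1 D u * pd 3 D u
          - 4 * D u * pd 1 (pd 3 D) u
          = 12 * ((L u) ^ 6)⁻¹ * (c₁ * c₆ - c₂ * c₄ - c₃ * c₅) := by
    intro u h0
    have e : c₁ * c₆ - c₂ * c₄ - c₃ * c₅ = c₆ * L u - pd 0 L u * pd 2 L u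
        - pd 1 L u * pd 3 L u := by
      rw [g0, g1, g2, g3, hL]; ring
    have e02 : pd 0 (pd 2 L) u = c₆ := by rw [g2, hG]; simp
    have e13 : pd 1 (pd 3 L) u = c₆ := by rw [g3, hG]; simp
    rw [e, hD]
    simp only [pd_inv_sq (hLd u) h0]
    rw [pd_pd_inv_sq hLd h0 0 2 (hdj 2 u), pd_pd_inv_sq hLd h0 1 3 (hdj 3 u), e02, e13]
    constructor <;> field_simp <;> ring
  refine ⟨fun u h0 => ⟨fun i => ?_, ?_, ?_, ?_, ?_, main u h0⟩, ?_, ?_⟩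
  · have h := key u h0 i i
    have z : pd i (pd i L) u = 0 := by
      fin_cases i
      · simp only [Fin.zero_eta, g0, hG]; simp
      · simp only [Fin.mk_one, g1, hG]; simp
      · simp only [Fin.reduceFinMk, g2, hG]; simp
      · simp only [Fin.reduceFinMk, g3, hG]; simp
    rw [z] at h
    linear_combination h
  · rw [key u h0, g1, hG]; simp
  · rw [key u h0, g3, hG]; simp
  · rw [key u h0, g1, hG]; simp
  · rw [key u h0, g3, hG]; simp
  · intro h
    by_cases hz : ∃ u, L u ≠ 0
    · obtain ⟨u, h0⟩ := hz
      have h1 := (h u h0).1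
      rw [(main u h0).1] at h1
      have h2 : (12 * ((L u) ^ 6)⁻¹ : ℝ) ≠ 0 := by positivity
      have h3 := (mul_eq_zero.mp h1).resolve_left h2
      linarith
    · push Not at hz
      have hz' : L = fun _ => 0 := funext hz
      have hp0 : ∀ i u, pd i L u = 0 := by
        intro i u; rw [hz']; simp [pd]
      have a0 := hp0 0 0
      have a1 := hp0 1 0
      have a := hz 0
      rw [g0] at a0
      rw [g1] at a1
      rw [hL] at a
      simp at a0 a1 a
      rw [a0, a1, a]; ring
  · intro h u h0
    have hc : c₁ * c₆ - c₂ * c₄ - c₃ * c₅ = 0 := by linarith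
    have := main u h0
    rw [hc, mul_zero] at this
    exact this
end

section
/- Let A, B, C, D, E, f_xx, f_xy, f_yy ∈ ℝ satisfy the Monge–Ampère relation A f_xx + 2B f_xy + C f_yy + D (f_xx f_yy − f_xy²) + E = 0, and let G* be the symmetric 2×2 real matrix [[2C + 2D f_xx, −2B + 2D f_xy], [−2B + 2D f_xy, 2A + 2D f_yy]]. Then det G* = 4 (AC − B² − DE), i.e., det G* equals four times the Pfaffian of the corresponding Monge–Ampère structure; consequently G* is invertible if and only if AC − B² − DE ≠ 0. -/
/-- If the Monge–Ampère relation `A fxx + 2B fxy + C fyy + D(fxx fyy − fxy²) + E = 0`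
holds, then the coordinate matrix `G* = [[2C, −2B], [−2B, 2A]] + 2D Hess(f)` of the
pullback metric has determinant `4(AC − B² − DE)`, four times the Pfaffian, and is
invertible iff `AC − B² − DE ≠ 0`. -/
theorem det_pullback_metric_on_shell (A B C D E fxx fxy fyy : ℝ)
    (hMA : A * fxx + 2 * B * fxy + C * fyy + D * (fxx * fyy - fxy ^ 2) + E = 0) :
    (!![2 * C + 2 * D * fxx, -2 * B + 2 * D * fxy;
        -2 * B + 2 * D * fxy, 2 * A + 2 * D * fyy] : Matrix (Fin 2) (Fin 2) ℝ).det =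
      4 * (A * C - B ^ 2 - D * E) ∧
    (IsUnit (!![2 * C + 2 * D * fxx, -2 * B + 2 * D * fxy;
        -2 * B + 2 * D * fxy, 2 * A + 2 * D * fyy] : Matrix (Fin 2) (Fin 2) ℝ) ↔
      A * C - B ^ 2 - D * E ≠ 0) := by
  have hdet : (!![2 * C + 2 * D * fxx, -2 * B + 2 * D * fxy;
        -2 * B + 2 * D * fxy, 2 * A + 2 * D * fyy] : Matrix (Fin 2) (Fin 2) ℝ).det =
      4 * (A * C - B ^ 2 - D * E) := by
    rw [Matrix.det_fin_two_of]
    linear_combination 4 * D * hMA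
  refine ⟨hdet, ?_⟩
  rw [Matrix.isUnit_iff_isUnit_det, hdet, isUnit_iff_ne_zero]
  exact mul_ne_zero_iff_left (by norm_num)
end

section
/- Let A, B, C, D, E, f_xx, f_xy, f_yy ∈ ℝ satisfy the Monge–Ampère relation A f_xx + 2B f_xy + C f_yy + D (f_xx f_yy − f_xy²) + E = 0, and let G* be the symmetric 2×2 real matrix [[2C + 2D f_xx, −2B + 2D f_xy], [−2B + 2D f_xy, 2A + 2D f_yy]]. Then every eigenvalue λ ∈ ℝ of G* satisfies the quadratic equation λ² − λ (2C + 2A + 2D f_yy + 2D f_xx) − 4(B² − AC) − 4DE = 0; equivalently, the characteristic polynomial of G* is X² − 2(A + C + D(f_xx + f_yy)) X + 4(AC − B² − DE). -/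
open Polynomial Matrix

/-- If the Monge–Ampère relation `A fxx + 2B fxy + C fyy + D(fxx fyy − fxy²) + E = 0`
holds, then every real eigenvalue `λ` of the pullback-metric matrix
`G* = [[2C, −2B], [−2B, 2A]] + 2D Hess(f)` satisfies
`λ² − λ(2C + 2A + 2D fyy + 2D fxx) − 4(B² − AC) − 4DE = 0`; equivalently, the
characteristic polynomial of `G*` is
`X² − 2(A + C + D(fxx + fyy)) X + 4(AC − B² − DE)`. -/
theorem eigenvalues_pullback_metric (A B C D E fxx fxy fyy : ℝ)
    (hMA : A * fxx + 2 * B * fxy + C * fyy + D * (fxx * fyy - fxy ^ 2) + E = 0)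
    (G : Matrix (Fin 2) (Fin 2) ℝ)
    (hG : G = !![2 * C + 2 * D * fxx, -2 * B + 2 * D * fxy;
        -2 * B + 2 * D * fxy, 2 * A + 2 * D * fyy]) :
    (∀ lam : ℝ, (∃ v : Fin 2 → ℝ, v ≠ 0 ∧ G.mulVec v = lam • v) →
      lam ^ 2 - lam * (2 * C + 2 * A + 2 * D * fyy + 2 * D * fxx)
        - 4 * (B ^ 2 - A * C) - 4 * D * E = 0) ∧
    G.charpoly = X ^ 2 - Polynomial.C (2 * (A + C + D * (fxx + fyy))) * X +
      Polynomial.C (4 * (A * C - B ^ 2 - D * E)) := by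
  have hdet : (2 * C + 2 * D * fxx) * (2 * A + 2 * D * fyy)
      - (-2 * B + 2 * D * fxy) * (-2 * B + 2 * D * fxy) = 4 * (A * C - B ^ 2 - D * E) := by
    linear_combination 4 * D * hMA
  subst hG
  constructor
  · rintro lam ⟨v, hv, h⟩
    have h0 := congrFun h 0
    have h1 := congrFun h 1
    simp [Matrix.mulVec, dotProduct, Fin.sum_univ_two] at h0 h1
    set q := lam ^ 2 - lam * (2 * C + 2 * A + 2 * D * fyy + 2 * D * fxx)
        - 4 * (B ^ 2 - A * C) - 4 * D * E with hq
    have e0 : q * v 0 = 0 := by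
      rw [hq]
      linear_combination (-v 0) * hdet - (lam - (2 * A + 2 * D * fyy)) * h0
        - (-2 * B + 2 * D * fxy) * h1
    have e1 : q * v 1 = 0 := by
      rw [hq]
      linear_combination (-v 1) * hdet - (lam - (2 * C + 2 * D * fxx)) * h1
        - (-2 * B + 2 * D * fxy) * h0
    by_contra hne
    apply hv
    funext i
    fin_cases i
    · exact (mul_eq_zero.mp e0).resolve_left hne
    · exact (mul_eq_zero.mp e1).resolve_left hne
  · rw [Matrix.charpoly_fin_two, Matrix.det_fin_two_of, Matrix.trace_fin_two_of, hdet]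
    congr 4
    ring
end
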